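/- Let K ⊆ ℝ^m and λ ∈ ℝ^n be such that ∇f(Aλ) ∈ K and Aᵀ∇f(Aλ) ≠ 0. Then ‖∇F(λ)‖_{L^{-1}} ≥ γ̃(A,K) · D¹_{K ∩ Ker(Aᵀ)}(∇f(Aλ)) / f(Aλ). Consequently, if moreover the ESO holds with constant β > 0 and δ_i = −(1/(β L_i))·∇_i F(λ), then E[F(λ + δ_{[Ŝ]})] ≤ F(λ) − (τ/(2βn)) · γ̃(A,K)² · D¹_{K ∩ Ker(Aᵀ)}(∇f(Aλ))² / f(Aλ)². -/

import Mathlib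

open Finset
open scoped BigOperators Classical

noncomputable section

/-- Exponential loss `f(x) = (1/m) Σ_j exp(x_j)` (the normaliser `m` is fixed,
the index type may vary). -/
def fExp (m : ℕ) {ι : Type} [Fintype ι] (x : ι → ℝ) : ℝ :=
  (1 / (m : ℝ)) * ∑ j, Real.exp (x j)

/-- Gradient of the exponential loss. -/
def gradf (m : ℕ) {ι : Type} [Fintype ι] (x : ι → ℝ) : ι → ℝ :=
  fun j => fderiv ℝ (fExp m (ι := ι)) x (Pi.single j 1)

/-- `F(λ) = log f(Aλ)`. -/
def FObj {mr : Type} [Fintype mr] {n : ℕ} (m : ℕ) (A : Matrix mr (Fin n) ℝ)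
    (lam : Fin n → ℝ) : ℝ :=
  Real.log (fExp m (A.mulVec lam))

/-- Gradient of `F`: `(∇F(λ))_i` is the `i`-th partial derivative. -/
def gradF {mr : Type} [Fintype mr] {n : ℕ} (m : ℕ) (A : Matrix mr (Fin n) ℝ)
    (lam : Fin n → ℝ) : Fin n → ℝ :=
  fun i => fderiv ℝ (FObj m A) lam (Pi.single i 1)

/-- Coordinate-wise Lipschitz constants `L_i = max_j A_{j,i}²`. -/
def Lip {mr : Type} [Fintype mr] {n : ℕ} (A : Matrix mr (Fin n) ℝ) (i : Fin n) : ℝ :=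
  ⨆ j, (A j i) ^ 2

/-- `h_{[S]}`: keep the coordinates of `h` in `S`, zero the others. -/
def restr {n : ℕ} (h : Fin n → ℝ) (S : Finset (Fin n)) : Fin n → ℝ :=
  fun i => if i ∈ S then h i else 0

/-- Expectation over the `τ`-nice sampling (uniform over subsets of cardinality `τ`). -/
def niceExp (n τ : ℕ) (g : Finset (Fin n) → ℝ) : ℝ :=
  (∑ S ∈ Finset.powersetCard τ (Finset.univ : Finset (Fin n)), g S) /
    ((Finset.powersetCard τ (Finset.univ : Finset (Fin n))).card : ℝ)

/-- Expected Separable Overapproximation with constant `β` and weights `L`. -/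
def ESO {mr : Type} [Fintype mr] {n : ℕ} (m : ℕ) (A : Matrix mr (Fin n) ℝ)
    (τ : ℕ) (β : ℝ) : Prop :=
  ∀ x h : Fin n → ℝ,
    niceExp n τ (fun S => FObj m A (x + restr h S)) ≤
      FObj m A x + ((τ : ℝ) / (n : ℝ)) *
        ((∑ i, gradF m A x i * h i) + (β / 2) * ∑ i, Lip A i * h i ^ 2)

/-- ℓ¹ distance from `x` to a set `K`. -/
def D1 {ι : Type} [Fintype ι] (K : Set (ι → ℝ)) (x : ι → ℝ) : ℝ :=
  ⨅ z : K, ∑ j, |x j - (z : ι → ℝ) j|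

/-- Kernel of `Aᵀ`. -/
def kerAT {mr : Type} [Fintype mr] {n : ℕ} (A : Matrix mr (Fin n) ℝ) : Set (mr → ℝ) :=
  {φ | A.transpose.mulVec φ = 0}

/-- `‖g‖_{L⁻¹} = (Σ_i g_i²/L_i)^{1/2}`. -/
def normLinv {mr : Type} [Fintype mr] {n : ℕ} (A : Matrix mr (Fin n) ℝ)
    (g : Fin n → ℝ) : ℝ :=
  Real.sqrt (∑ i, g i ^ 2 / Lip A i)

/-- `γ̃(A,K)`. -/
def gammaT {mr : Type} [Fintype mr] {n : ℕ} (A : Matrix mr (Fin n) ℝ)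
    (K : Set (mr → ℝ)) : ℝ :=
  ⨅ φ : {φ : mr → ℝ // φ ∈ K ∧ φ ∉ kerAT A},
    normLinv A (A.transpose.mulVec (φ : mr → ℝ)) / D1 (K ∩ kerAT A) (φ : mr → ℝ)

/-- Hard core `H(A)`. -/
def hardCore {mr : Type} [Fintype mr] {n : ℕ} (A : Matrix mr (Fin n) ℝ) : Set mr :=
  {j | ∃ φ : mr → ℝ, φ ∈ kerAT A ∧ (∀ k, 0 ≤ φ k) ∧ 0 < φ j}

/-- Parallel Adaboost iterates, given the sequence of sampled coordinate sets. -/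
def iter {mr : Type} [Fintype mr] {n : ℕ} (m : ℕ) (A : Matrix mr (Fin n) ℝ) (β : ℝ)
    (lam0 : Fin n → ℝ) (s : ℕ → Finset (Fin n)) : ℕ → Fin n → ℝ
  | 0 => lam0
  | t + 1 =>
    let lt := iter m A β lam0 s t
    let lt' : Fin n → ℝ := fun i =>
      if i ∈ s t then lt i - (1 / (β * Lip A i)) * gradF m A lt i else lt i
    if FObj m A lt' ≤ FObj m A lt then lt' else lt

/-!
By the chain rule `∇F(λ) = Aᵀ∇f(Aλ) / f(Aλ)`, so the lower bound on `‖∇F(λ)‖_{L⁻¹}` is the infimum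
defining `γ̃(A, K)` tested at `φ = ∇f(Aλ)`; when `φ ∈ Ker Aᵀ` its distance to `K ∩ Ker Aᵀ` vanishes
and the bound is trivial. The step `δ` is the minimiser of the separable quadratic model on the
right-hand side of the ESO, where the model equals `-‖∇F(λ)‖²_{L⁻¹} / (2β)`, and inserting the lower
bound gives the expected decrease.
-/

section

open Matrix

variable {ι : Type} [Fintype ι] {m n : ℕ}

theorem differentiable_fExp : Differentiable ℝ (fExp m (ι := ι)) := by
  unfold fExp
  fun_prop

theorem fExp_pos [Nonempty ι] (hm : 0 < m) (x : ι → ℝ) : 0 < fExp m x :=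
  mul_pos (one_div_pos.2 (Nat.cast_pos.2 hm))
    (Finset.sum_pos (fun j _ => Real.exp_pos (x j)) Finset.univ_nonempty)

theorem fderiv_fExp_apply (x h : ι → ℝ) :
    fderiv ℝ (fExp m (ι := ι)) x h = gradf m x ⬝ᵥ h := by
  conv_lhs => rw [pi_eq_sum_univ' h]
  simp only [map_sum, map_smul, smul_eq_mul, dotProduct, gradf, mul_comm]

theorem gradF_eq_inv_smul [Nonempty ι] (hm : 0 < m) (A : Matrix ι (Fin n) ℝ) (lam : Fin n → ℝ) :
    gradF m A lam = (fExp m (A *ᵥ lam))⁻¹ • (Aᵀ *ᵥ gradf m (A *ᵥ lam)) := by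
  have chain_rule : HasFDerivAt (FObj m A)
      ((fExp m (A *ᵥ lam))⁻¹ • (fderiv ℝ (fExp m) (A *ᵥ lam)).comp
        A.mulVecLin.toContinuousLinearMap) lam :=
    ((differentiable_fExp (A *ᵥ lam)).hasFDerivAt.comp lam
      A.mulVecLin.toContinuousLinearMap.hasFDerivAt).log (fExp_pos hm _).ne'
  ext i
  calc gradF m A lam i
      = (fExp m (A *ᵥ lam))⁻¹ * fderiv ℝ (fExp m) (A *ᵥ lam) (A *ᵥ Pi.single i 1) := by
        rw [gradF, chain_rule.fderiv]
        rfl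
    _ = (fExp m (A *ᵥ lam))⁻¹ * (gradf m (A *ᵥ lam) ⬝ᵥ A.col i) := by
        rw [fderiv_fExp_apply, mulVec_single_one]
    _ = ((fExp m (A *ᵥ lam))⁻¹ • (Aᵀ *ᵥ gradf m (A *ᵥ lam))) i := by
        rw [dotProduct_comm]
        rfl

theorem Lip_nonneg (A : Matrix ι (Fin n) ℝ) (i : Fin n) : 0 ≤ Lip A i :=
  Real.iSup_nonneg fun j => sq_nonneg (A j i)

theorem Lip_pos {A : Matrix ι (Fin n) ℝ} {i : Fin n} (hA : ∃ j, A j i ≠ 0) : 0 < Lip A i := by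
  obtain ⟨j, hj⟩ := hA
  exact (sq_pos_of_ne_zero hj).trans_le
    (le_ciSup (f := fun j => A j i ^ 2) (Set.finite_range _).bddAbove j)

theorem normLinv_nonneg (A : Matrix ι (Fin n) ℝ) (g : Fin n → ℝ) : 0 ≤ normLinv A g :=
  Real.sqrt_nonneg _

theorem sq_normLinv (A : Matrix ι (Fin n) ℝ) (g : Fin n → ℝ) :
    normLinv A g ^ 2 = ∑ i, g i ^ 2 / Lip A i :=
  Real.sq_sqrt (Finset.sum_nonneg fun i _ => div_nonneg (sq_nonneg _) (Lip_nonneg A i))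

theorem normLinv_smul (A : Matrix ι (Fin n) ℝ) (c : ℝ) (g : Fin n → ℝ) :
    normLinv A (c • g) = |c| * normLinv A g := by
  simp only [normLinv, Pi.smul_apply, smul_eq_mul, mul_pow, mul_div_assoc, ← Finset.mul_sum]
  rw [Real.sqrt_mul (sq_nonneg c), Real.sqrt_sq_eq_abs]

theorem normLinv_gradF [Nonempty ι] (hm : 0 < m) (A : Matrix ι (Fin n) ℝ) (lam : Fin n → ℝ) :
    normLinv A (gradF m A lam) =
      normLinv A (Aᵀ *ᵥ gradf m (A *ᵥ lam)) / fExp m (A *ᵥ lam) := by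
  rw [gradF_eq_inv_smul hm, normLinv_smul, abs_of_pos (inv_pos.2 (fExp_pos hm _)), inv_mul_eq_div]

theorem D1_nonneg (K : Set (ι → ℝ)) (x : ι → ℝ) : 0 ≤ D1 K x :=
  Real.iInf_nonneg fun _ => Finset.sum_nonneg fun _ _ => abs_nonneg _

theorem D1_eq_zero_of_mem {K : Set (ι → ℝ)} {x : ι → ℝ} (hx : x ∈ K) : D1 K x = 0 := by
  have dist_bddBelow : BddBelow (Set.range fun z : K => ∑ j, |x j - (z : ι → ℝ) j|) :=
    ⟨0, Set.forall_mem_range.2 fun _ => Finset.sum_nonneg fun _ _ => abs_nonneg _⟩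
  have le_dist_self := ciInf_le dist_bddBelow ⟨x, hx⟩
  simp only [sub_self, abs_zero, Finset.sum_const_zero] at le_dist_self
  exact le_dist_self.antisymm (D1_nonneg K x)

theorem normLinv_div_D1_nonneg (A : Matrix ι (Fin n) ℝ) (K : Set (ι → ℝ)) (g : Fin n → ℝ)
    (φ : ι → ℝ) : 0 ≤ normLinv A g / D1 K φ :=
  div_nonneg (normLinv_nonneg A g) (D1_nonneg K φ)

theorem gammaT_nonneg (A : Matrix ι (Fin n) ℝ) (K : Set (ι → ℝ)) : 0 ≤ gammaT A K :=
  Real.iInf_nonneg fun _ => normLinv_div_D1_nonneg A _ _ _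

theorem gammaT_le_div (A : Matrix ι (Fin n) ℝ) {K : Set (ι → ℝ)} {φ : ι → ℝ}
    (hφK : φ ∈ K) (hφker : φ ∉ kerAT A) :
    gammaT A K ≤ normLinv A (Aᵀ *ᵥ φ) / D1 (K ∩ kerAT A) φ :=
  ciInf_le (ι := {φ : ι → ℝ // φ ∈ K ∧ φ ∉ kerAT A})
    ⟨0, Set.forall_mem_range.2 fun _ => normLinv_div_D1_nonneg A _ _ _⟩ ⟨φ, hφK, hφker⟩

theorem gammaT_mul_D1_le (A : Matrix ι (Fin n) ℝ) {K : Set (ι → ℝ)} {φ : ι → ℝ} (hφ : φ ∈ K) :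
    gammaT A K * D1 (K ∩ kerAT A) φ ≤ normLinv A (Aᵀ *ᵥ φ) := by
  rcases (D1_nonneg (K ∩ kerAT A) φ).eq_or_lt with hD | hD
  -- `D1` also vanishes when `K ∩ kerAT A` is empty, the real infimum over `∅` being `0`.
  · rw [← hD, mul_zero]
    exact normLinv_nonneg A _
  · have hφker : φ ∉ kerAT A := fun h => hD.ne' (D1_eq_zero_of_mem ⟨hφ, h⟩)
    exact (le_div_iff₀ hD).1 (gammaT_le_div A hφ hφker)

theorem gammaT_mul_D1_div_le_normLinv_gradF [Nonempty ι] (hm : 0 < m) (A : Matrix ι (Fin n) ℝ)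
    {K : Set (ι → ℝ)} {lam : Fin n → ℝ} (hK : gradf m (A *ᵥ lam) ∈ K) :
    gammaT A K * D1 (K ∩ kerAT A) (gradf m (A *ᵥ lam)) / fExp m (A *ᵥ lam) ≤
      normLinv A (gradF m A lam) := by
  rw [normLinv_gradF hm]
  exact div_le_div_of_nonneg_right (gammaT_mul_D1_le A hK) (fExp_pos hm _).le

theorem separable_quadratic_eq_of_step {κ 𝕜 : Type*} [Fintype κ] [Field 𝕜] [NeZero (2 : 𝕜)]
    {β : 𝕜} (hβ : β ≠ 0) {L g δ : κ → 𝕜} (hL : ∀ i, L i ≠ 0)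
    (hδ : ∀ i, δ i = -(1 / (β * L i)) * g i) :
    (∑ i, g i * δ i) + (β / 2) * ∑ i, L i * δ i ^ 2 = -(∑ i, g i ^ 2 / L i) / (2 * β) := by
  rw [Finset.mul_sum, ← Finset.sum_add_distrib, ← Finset.sum_neg_distrib, Finset.sum_div]
  refine Finset.sum_congr rfl fun i _ => ?_
  have hLi := hL i
  rw [hδ i]
  field_simp
  ring

theorem ESO.niceExp_step_le {A : Matrix ι (Fin n) ℝ} {τ : ℕ} {β : ℝ}
    (hESO : ESO m A τ β) (hA : ∀ i, ∃ j, A j i ≠ 0) (hβ : β ≠ 0) {lam δ : Fin n → ℝ}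
    (hδ : ∀ i, δ i = -(1 / (β * Lip A i)) * gradF m A lam i) :
    niceExp n τ (fun S => FObj m A (lam + restr δ S)) ≤
      FObj m A lam - τ / (2 * β * n) * normLinv A (gradF m A lam) ^ 2 := by
  refine (hESO lam δ).trans_eq ?_
  rw [separable_quadratic_eq_of_step hβ (fun i => (Lip_pos (hA i)).ne') hδ, sq_normLinv]
  ring

theorem stmt4_general [Nonempty ι] (hm : 0 < m) (A : Matrix ι (Fin n) ℝ)
    (hA : ∀ i, ∃ j, A j i ≠ 0) (τ : ℕ) (K : Set (ι → ℝ)) (lam : Fin n → ℝ)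
    (hK : gradf m (A *ᵥ lam) ∈ K) :
    normLinv A (gradF m A lam) ≥
      gammaT A K * D1 (K ∩ kerAT A) (gradf m (A *ᵥ lam)) / fExp m (A *ᵥ lam) ∧
    ∀ β : ℝ, 0 < β → ESO m A τ β →
      ∀ δ : Fin n → ℝ, (∀ i, δ i = -(1 / (β * Lip A i)) * gradF m A lam i) →
        niceExp n τ (fun S => FObj m A (lam + restr δ S)) ≤
          FObj m A lam - τ / (2 * β * n) * gammaT A K ^ 2 *
            D1 (K ∩ kerAT A) (gradf m (A *ᵥ lam)) ^ 2 / fExp m (A *ᵥ lam) ^ 2 := by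
  have norm_ge := gammaT_mul_D1_div_le_normLinv_gradF hm A hK
  refine ⟨norm_ge, fun β hβ hESO δ hδ => (hESO.niceExp_step_le hA hβ.ne' hδ).trans ?_⟩
  rw [mul_assoc _ (gammaT A K ^ 2), mul_div_assoc, ← mul_pow, ← div_pow]
  have bound_nonneg :
      0 ≤ gammaT A K * D1 (K ∩ kerAT A) (gradf m (A *ᵥ lam)) / fExp m (A *ᵥ lam) :=
    div_nonneg (mul_nonneg (gammaT_nonneg A K) (D1_nonneg _ _)) (fExp_pos hm _).le
  gcongr

end

/-- if `∇f(Aλ) ∈ K` and `Aᵀ∇f(Aλ) ≠ 0` then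
`‖∇F(λ)‖_{L⁻¹} ≥ γ̃(A,K)·D¹_{K∩Ker Aᵀ}(∇f(Aλ))/f(Aλ)`; consequently under the
ESO the expected decrease is at least `(τ/(2βn))·γ̃²·D¹²/f(Aλ)²`. -/
theorem stmt4 {m n : ℕ} (hm : 1 ≤ m) (hn : 1 ≤ n) (A : Matrix (Fin m) (Fin n) ℝ)
    (hA : ∀ i : Fin n, ∃ j : Fin m, A j i ≠ 0)
    (τ : ℕ) (hτ1 : 1 ≤ τ) (hτn : τ ≤ n)
    (K : Set (Fin m → ℝ)) (lam : Fin n → ℝ)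
    (hK : gradf m (A.mulVec lam) ∈ K)
    (hker : A.transpose.mulVec (gradf m (A.mulVec lam)) ≠ 0) :
    normLinv A (gradF m A lam) ≥
      gammaT A K * D1 (K ∩ kerAT A) (gradf m (A.mulVec lam)) / fExp m (A.mulVec lam) ∧
    ∀ β : ℝ, 0 < β → ESO m A τ β →
      ∀ δ : Fin n → ℝ, (∀ i, δ i = -(1 / (β * Lip A i)) * gradF m A lam i) →
        niceExp n τ (fun S => FObj m A (lam + restr δ S)) ≤
          FObj m A lam - (τ : ℝ) / (2 * β * (n : ℝ)) * gammaT A K ^ 2 *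
            D1 (K ∩ kerAT A) (gradf m (A.mulVec lam)) ^ 2 / fExp m (A.mulVec lam) ^ 2 := by
  have : Nonempty (Fin m) := ⟨⟨0, hm⟩⟩
  exact stmt4_general hm A hA τ K lam hK

end
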